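/- arXiv:2312.01704 — 2 statements merged into one kernel-verified Lean document; each statement's English description precedes it below -/
import Mathlib

section
/- If x, z ∈ σᵢ(D), dᵢ(x,z) < r(x), and z ∈ σⱼ(D) for some j ∈ I, then x ∈ σⱼ(D) and dᵢ(x,z) = dⱼ(x,z). -/
noncomputable section

open Set
open scoped ENNReal

/-- The Euclidean plane `ℝ²` with the Euclidean metric. -/
abbrev E2 : Type := EuclideanSpace ℝ (Fin 2)

/-- Vertices of the fixed closed regular (equilateral) triangle of side length 1. -/
def p0 : E2 := !₂[0, 0]
def p1 : E2 := !₂[1, 0]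
def p2 : E2 := !₂[1 / 2, Real.sqrt 3 / 2]

/-- `Dtri` is the fixed closed regular triangle in `ℝ²` with edge length 1. -/
def Dtri : Set E2 := convexHull ℝ {p0, p1, p2}

/-- `V0` is the set of the three vertices of `Dtri`. -/
def V0 : Set E2 := {p0, p1, p2}

/-- The three closed edges of `Dtri`. -/
def e01 : Set E2 := segment ℝ p0 p1
def e12 : Set E2 := segment ℝ p1 p2
def e02 : Set E2 := segment ℝ p0 p2

/-- `E0` is the set of the three closed edges of `Dtri`. -/
def E0 : Set (Set E2) := {e01, e12, e02}

/-- The open edge `e° = e ∖ V₀`. -/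
def eo (e : Set E2) : Set E2 := e \ V0

/-- `Do = D°` is the interior of `Dtri` in `ℝ²`. -/
def Do : Set E2 := interior Dtri

/-- `l : E₀ → ℝ` is positive and satisfies the strict triangle inequalities:
`l e₁ + l e₂ > l e₃` whenever `{e₁, e₂, e₃} = E₀`. -/
def TriIneq (l : Set E2 → ℝ) : Prop :=
  (∀ e ∈ E0, 0 < l e) ∧
  ∀ e₁ e₂ e₃ : Set E2, ({e₁, e₂, e₃} : Set (Set E2)) = E0 → l e₁ + l e₂ > l e₃

/-- A linear map `f : ℝ² → ℝ²` realizes the edge lengths `l`, i.e. for each `e ∈ E₀`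
the segment `f(e)` has Euclidean length `l e`. -/
def Realizes (f : E2 →ₗ[ℝ] E2) (l : Set E2 → ℝ) : Prop :=
  dist (f p0) (f p1) = l e01 ∧ dist (f p1) (f p2) = l e12 ∧ dist (f p0) (f p2) = l e02

/-- The metric `d[l]` on `Dtri`, defined by `d[l](x,y) = |f x - f y|₂` for a linear map `f`
realizing the edge lengths `l` (this is independent of the choice of `f`). -/
def dD (l : Set E2 → ℝ) (x y : E2) : ℝ :=
  letI := Classical.propDecidable (∃ f : E2 →ₗ[ℝ] E2, Realizes f l)
  if h : ∃ f : E2 →ₗ[ℝ] E2, Realizes f l then dist (h.choose x) (h.choose y) else 0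

/-- A triangulation `T = (σᵢ)_{i ∈ I}`, `I = Fin n`, of a topological space `S`:
a finite family of continuous maps `σᵢ : Dtri → S` such that
(a) `σᵢ` is injective on each open edge, (b) `σᵢ` is injective on `D°`,
(c) `S` is the disjoint union of `⋃ᵢ σᵢ(V₀)`, the sets `σᵢ(D°)`, and the distinct sets
among the `σᵢ(e°)`, and (d) glued edges are identified by a linear homeomorphism. -/
structure Triangulation (S : Type) [TopologicalSpace S] (n : ℕ) where
  σ : Fin n → E2 → S
  continuousOn : ∀ i, ContinuousOn (σ i) Dtri
  inj_edge : ∀ i, ∀ e ∈ E0, InjOn (σ i) (eo e)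
  inj_int : ∀ i, InjOn (σ i) Do
  cover : (⋃ i, σ i '' V0) ∪ (⋃ i, σ i '' Do) ∪ (⋃ i, ⋃ e ∈ E0, σ i '' eo e) = univ
  disj_int : ∀ i j, i ≠ j → Disjoint (σ i '' Do) (σ j '' Do)
  disj_vert_int : ∀ j, Disjoint (⋃ i, σ i '' V0) (σ j '' Do)
  disj_vert_edge : ∀ j, ∀ e ∈ E0, Disjoint (⋃ i, σ i '' V0) (σ j '' eo e)
  disj_int_edge : ∀ i j, ∀ e ∈ E0, Disjoint (σ i '' Do) (σ j '' eo e)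
  edge_eq_or_disjoint : ∀ i j, ∀ e ∈ E0, ∀ e' ∈ E0,
    σ i '' eo e = σ j '' eo e' ∨ Disjoint (σ i '' eo e) (σ j '' eo e')
  glue : ∀ i j, ∀ e ∈ E0, ∀ e' ∈ E0, σ i '' eo e = σ j '' eo e' →
    ∃ A : E2 →ᵃ[ℝ] E2, A '' e = e' ∧ ∀ x ∈ e, σ j (A x) = σ i x

variable {S : Type} [TopologicalSpace S] {n : ℕ}

/-- `l ∈ ℝ^{E(T)}_Δ`: `l` assigns positive lengths to the edges of `T` satisfying the
strict triangle inequalities in each triangle. -/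
def TriIneqT (T : Triangulation S n) (l : Set S → ℝ) : Prop :=
  (∀ (i : Fin n), ∀ e ∈ E0, 0 < l (T.σ i '' e)) ∧
  ∀ (i : Fin n), ∀ e₁ e₂ e₃ : Set E2, ({e₁, e₂, e₃} : Set (Set E2)) = E0 →
    l (T.σ i '' e₁) + l (T.σ i '' e₂) > l (T.σ i '' e₃)

/-- The restricted edge lengths `l^{(i)}` on the triangle `σᵢ(D)`: `l^{(i)}_e = l_{σᵢ(e)}`. -/
def lRes (T : Triangulation S n) (l : Set S → ℝ) (i : Fin n) : Set E2 → ℝ :=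
  fun e => l (T.σ i '' e)

/-- `dᵢ(x,y) = min { d[l^{(i)}](x',y') : x' ∈ σᵢ⁻¹(x), y' ∈ σᵢ⁻¹(y) }` for `x, y ∈ σᵢ(D)`. -/
def dTri (T : Triangulation S n) (l : Set S → ℝ) (i : Fin n) (x y : S) : ℝ :=
  sInf { r | ∃ x' ∈ Dtri, ∃ y' ∈ Dtri,
    T.σ i x' = x ∧ T.σ i y' = y ∧ r = dD (lRes T l i) x' y' }

/-- The set of sums `Σ_j d_{i_j}(x_{j-1}, x_j)` over chains from `x` to `y`. -/
def chainSums (T : Triangulation S n) (l : Set S → ℝ) (x y : S) : Set ℝ :=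
  { r | ∃ (k : ℕ) (c : ℕ → S) (idx : ℕ → Fin n),
      c 0 = x ∧ c k = y ∧
      (∀ j < k, c j ∈ T.σ (idx j) '' Dtri ∧ c (j + 1) ∈ T.σ (idx j) '' Dtri) ∧
      r = ∑ j ∈ Finset.range k, dTri T l (idx j) (c j) (c (j + 1)) }

/-- The glued metric `d[l]` on `S`. -/
def dGlue (T : Triangulation S n) (l : Set S → ℝ) (x y : S) : ℝ :=
  sInf (chainSums T l x y)

/-- `K(x)`: the union of the edges of `Dtri` not containing `x`. -/
def Kset (x : E2) : Set E2 := ⋃₀ {e ∈ E0 | x ∉ e}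

/-- The distance from `x` to `K(x)` in `(Dtri, d[l'])`. -/
def rObs (l' : Set E2 → ℝ) (x : E2) : ℝ := sInf { r | ∃ y ∈ Kset x, r = dD l' x y }

/-- `r(x) = min { rᵢ(x') : i ∈ I, x' ∈ σᵢ⁻¹(x) }` for `x ∈ S`. -/
def rS (T : Triangulation S n) (l : Set S → ℝ) (x : S) : ℝ :=
  sInf { r | ∃ i : Fin n, ∃ x' ∈ Dtri, T.σ i x' = x ∧ r = rObs (lRes T l i) x' }

theorem aux_dD_nonneg (l : Set E2 → ℝ) (x y : E2) : 0 ≤ dD l x y := by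
  unfold dD
  split_ifs
  · exact dist_nonneg
  · exact le_rfl

theorem aux_dD_self (l : Set E2 → ℝ) (x : E2) : dD l x x = 0 := by
  unfold dD
  split_ifs <;> simp

theorem aux_dD_eq (l : Set E2 → ℝ) (h : ∃ f : E2 →ₗ[ℝ] E2, Realizes f l) :
    ∃ f : E2 →ₗ[ℝ] E2, Realizes f l ∧ ∀ x y, dD l x y = dist (f x) (f y) := by
  refine ⟨h.choose, h.choose_spec, fun x y => ?_⟩
  unfold dD
  rw [dif_pos h]

theorem aux_dD_zero (l : Set E2 → ℝ) (h : ¬ ∃ f : E2 →ₗ[ℝ] E2, Realizes f l) (x y : E2) :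
    dD l x y = 0 := by
  unfold dD
  rw [dif_neg h]

theorem aux_edge (e : Set E2) (he : e ∈ E0) : ∃ a b : E2, e = segment ℝ a b ∧
    ∀ (f : E2 →ₗ[ℝ] E2) (l : Set E2 → ℝ), Realizes f l → dist (f a) (f b) = l e := by
  rcases he with rfl | rfl | rfl
  · exact ⟨p0, p1, rfl, fun f l h => h.1⟩
  · exact ⟨p1, p2, rfl, fun f l h => h.2.1⟩
  · exact ⟨p0, p2, rfl, fun f l h => h.2.2⟩

theorem aux_seg_dist (g : E2 →ᵃ[ℝ] E2) (a b : E2) (s t : ℝ) :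
    dist (g (AffineMap.lineMap a b s)) (g (AffineMap.lineMap a b t))
      = dist s t * dist (g a) (g b) := by
  rw [AffineMap.apply_lineMap, AffineMap.apply_lineMap, dist_lineMap_lineMap]

theorem aux_glue (fi fj : E2 →ₗ[ℝ] E2) (A : E2 →ᵃ[ℝ] E2) (a b c d x z : E2)
    (hA : A '' segment ℝ a b = segment ℝ c d) (hl : dist (fi a) (fi b) = dist (fj c) (fj d))
    (hx : x ∈ segment ℝ a b) (hz : z ∈ segment ℝ a b) :
    dist (fj (A x)) (fj (A z)) ≤ dist (fi x) (fi z) := by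
  rw [segment_eq_image_lineMap] at hx hz
  obtain ⟨s, hs, rfl⟩ := hx
  obtain ⟨t, ht, rfl⟩ := hz
  have h1 := aux_seg_dist (fj.toAffineMap.comp A) a b s t
  have h2 := aux_seg_dist fi.toAffineMap a b s t
  simp only [AffineMap.comp_apply, LinearMap.coe_toAffineMap] at h1 h2
  rw [h1, h2, hl]
  apply mul_le_mul_of_nonneg_left _ dist_nonneg
  have key : ∀ y ∈ segment ℝ a b, ∃ u ∈ Icc (0:ℝ) 1, A y = AffineMap.lineMap c d u := by
    intro y hy
    have : A y ∈ segment ℝ c d := hA ▸ mem_image_of_mem _ hy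
    rw [segment_eq_image_lineMap] at this
    obtain ⟨u, hu, h⟩ := this
    exact ⟨u, hu, h.symm⟩
  obtain ⟨u, hu, hau⟩ := key a (left_mem_segment ℝ a b)
  obtain ⟨v, hv, hbv⟩ := key b (right_mem_segment ℝ a b)
  have h3 := aux_seg_dist fj.toAffineMap c d u v
  simp only [LinearMap.coe_toAffineMap] at h3
  rw [hau, hbv, h3]
  have : dist u v ≤ 1 := by
    rw [Real.dist_eq, abs_le]
    constructor <;> linarith [hu.1, hu.2, hv.1, hv.2]
  nlinarith [dist_nonneg (x := fj c) (y := fj d)]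

theorem aux_mem_Dtri (a b c : ℝ) (ha : 0 ≤ a) (hb : 0 ≤ b) (hc : 0 ≤ c) (h : a + b + c = 1) :
    a • p0 + b • p1 + c • p2 ∈ Dtri := by
  have hcx : Convex ℝ Dtri := convex_convexHull ℝ _
  have h0 : p0 ∈ Dtri := subset_convexHull ℝ _ (by simp)
  have h1 : p1 ∈ Dtri := subset_convexHull ℝ _ (by simp)
  have h2 : p2 ∈ Dtri := subset_convexHull ℝ _ (by simp)
  have := hcx.sum_mem (t := Finset.univ) (w := ![a, b, c]) (z := ![p0, p1, p2])
    (by intro i _; fin_cases i <;> simpa) (by simp [Fin.sum_univ_three, h])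
    (by intro i _; fin_cases i <;> simpa)
  simpa [Fin.sum_univ_three] using this

theorem aux_Dtri_eq (w : E2) (hw : w ∈ Dtri) : ∃ a b c : ℝ, 0 ≤ a ∧ 0 ≤ b ∧ 0 ≤ c ∧
    a + b + c = 1 ∧ a • p0 + b • p1 + c • p2 = w := by
  unfold Dtri at hw
  rw [convexHull_insert (by simp), convexHull_pair] at hw
  simp only [convexJoin, mem_iUnion, mem_singleton_iff, exists_prop, exists_eq_left] at hw
  obtain ⟨v, ⟨s, t, hs, ht, hst, rfl⟩, ⟨s', t', hs', ht', hst', rfl⟩⟩ := hw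
  refine ⟨s', t' * s, t' * t, hs', by positivity, by positivity, ?_, ?_⟩
  · rw [add_assoc, ← mul_add, hst]; linarith
  · module

theorem aux_int (w : E2) (h1 : 0 < w 1) (h2 : 0 < √3 * w 0 - w 1)
    (h3 : 0 < √3 * (1 - w 0) - w 1) : w ∈ Do := by
  have h3' : (√3)^2 = 3 := Real.sq_sqrt (by norm_num)
  have hp : 0 < √3 := by positivity
  refine mem_interior.2 ⟨{w : E2 | 0 < w 1 ∧ 0 < √3 * w 0 - w 1 ∧ 0 < √3 * (1 - w 0) - w 1},
    ?_, ?_, ⟨h1, h2, h3⟩⟩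
  · rintro w ⟨h1, h2, h3⟩
    have := aux_mem_Dtri ((√3 * (1 - w 0) - w 1) / √3) ((√3 * w 0 - w 1) / √3) (2 * w 1 / √3)
      (by positivity) (by positivity) (by positivity) (by field_simp; ring)
    convert this using 1
    ext i
    fin_cases i
    · simp [p0, p1, p2]; field_simp; ring
    · simp [p0, p1, p2]; field_simp
  · refine IsOpen.and ?_ (IsOpen.and ?_ ?_) <;>
    exact isOpen_lt (by fun_prop) (by fun_prop)

theorem aux_cases (w : E2) (hw : w ∈ Dtri) : w ∈ Do ∨ w ∈ V0 ∨ ∃ e ∈ E0, w ∈ eo e := by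
  by_cases hV : w ∈ V0
  · exact Or.inr (Or.inl hV)
  have hE : ∀ e ∈ E0, w ∈ e → w ∈ Do ∨ w ∈ V0 ∨ ∃ e ∈ E0, w ∈ eo e :=
    fun e he hwe => Or.inr (Or.inr ⟨e, he, hwe, hV⟩)
  obtain ⟨a, b, c, ha, hb, hc, h, rfl⟩ := aux_Dtri_eq w hw
  rcases ha.eq_or_lt with rfl | ha
  · exact hE e12 (by simp [E0]) ⟨b, c, hb, hc, by linarith, by simp⟩
  rcases hb.eq_or_lt with rfl | hb
  · exact hE e02 (by simp [E0]) ⟨a, c, ha.le, hc, by linarith, by simp⟩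
  rcases hc.eq_or_lt with rfl | hc
  · exact hE e01 (by simp [E0]) ⟨a, b, ha.le, hb.le, by linarith, by simp⟩
  left
  have hp : 0 < √3 := by positivity
  have hs : a = 1 - b - c := by linarith
  apply aux_int
  · simp [p0, p1, p2]; positivity
  · simp [p0, p1, p2]
    nlinarith [mul_pos hp hb]
  · simp [p0, p1, p2]
    nlinarith [mul_pos hp ha]

theorem aux_e01 (w : E2) (h : w ∈ e01) : w 1 = 0 := by
  obtain ⟨s, t, _, _, hst, rfl⟩ := h
  simp [p0, p1]

theorem aux_e02 (w : E2) (h : w ∈ e02) : √3 * w 0 - w 1 = 0 := by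
  obtain ⟨s, t, _, _, hst, rfl⟩ := h
  simp [p0, p2]; ring

theorem aux_e12 (w : E2) (h : w ∈ e12) : √3 * (1 - w 0) - w 1 = 0 := by
  obtain ⟨s, t, _, _, hst, rfl⟩ := h
  have : s = 1 - t := by linarith
  subst this
  simp [p1, p2]; ring

theorem aux_vert (v w : E2) (hv : v ∈ V0) (h : ∀ e ∈ E0, v ∈ e → w ∈ e) : w = v := by
  have hp : √3 ≠ 0 := by positivity
  rcases hv with rfl | rfl | rfl
  · have h1 := aux_e01 w (h e01 (by simp [E0]) (left_mem_segment ℝ _ _))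
    have h2 := aux_e02 w (h e02 (by simp [E0]) (left_mem_segment ℝ _ _))
    have h3 : w 0 = 0 := by
      apply mul_left_cancel₀ hp; linarith
    ext i; fin_cases i <;> simp [p0, h1, h3]
  · have h1 := aux_e01 w (h e01 (by simp [E0]) (right_mem_segment ℝ _ _))
    have h2 := aux_e12 w (h e12 (by simp [E0]) (left_mem_segment ℝ _ _))
    have h3 : w 0 = 1 := by
      apply mul_left_cancel₀ hp; linarith
    ext i; fin_cases i <;> simp [p1, h1, h3]
  · have h1 := aux_e02 w (h e02 (by simp [E0]) (right_mem_segment ℝ _ _))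
    have h2 := aux_e12 w (h e12 (by simp [E0]) (right_mem_segment ℝ _ _))
    have h3 : w 0 = 1 / 2 := by
      apply mul_left_cancel₀ hp; linarith
    have h4 : w 1 = √3 / 2 := by rw [h3] at h1; linarith
    ext i; fin_cases i <;> simp [p2, h4, h3]

theorem aux_rS_le (T : Triangulation S n) (l : Set S → ℝ) (i : Fin n) (x' y : E2)
    (hx : x' ∈ Dtri) (hy : y ∈ Kset x') : rS T l (T.σ i x') ≤ dD (lRes T l i) x' y := by
  have hr : ∀ (l' : Set E2 → ℝ) w, 0 ≤ rObs l' w := by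
    intro l' w
    apply Real.sInf_nonneg
    rintro _ ⟨y, _, rfl⟩
    exact aux_dD_nonneg _ _ _
  have h1 : rS T l (T.σ i x') ≤ rObs (lRes T l i) x' := by
    refine csInf_le ⟨0, ?_⟩ ⟨i, x', hx, rfl, rfl⟩
    rintro _ ⟨_, _, _, _, rfl⟩
    exact hr _ _
  refine h1.trans (csInf_le ⟨0, ?_⟩ ⟨y, hy, rfl⟩)
  rintro _ ⟨_, _, rfl⟩
  exact aux_dD_nonneg _ _ _

theorem aux_dTri_le (T : Triangulation S n) (l : Set S → ℝ) (i : Fin n) (x' y' : E2)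
    (hx : x' ∈ Dtri) (hy : y' ∈ Dtri) :
    dTri T l i (T.σ i x') (T.σ i y') ≤ dD (lRes T l i) x' y' := by
  refine csInf_le ⟨0, ?_⟩ ⟨x', hx, y', hy, rfl, rfl, rfl⟩
  rintro _ ⟨_, _, _, _, _, _, rfl⟩
  exact aux_dD_nonneg _ _ _

theorem aux_edge_sub (e : Set E2) (he : e ∈ E0) : e ⊆ Dtri := by
  rcases he with rfl | rfl | rfl <;>
  exact segment_subset_convexHull (by simp) (by simp)

theorem aux_realizable (T : Triangulation S n) (l : Set S → ℝ) (i : Fin n) (x' z' : E2)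
    (hx : x' ∈ Dtri) (hlt : dD (lRes T l i) x' z' < rS T l (T.σ i x')) :
    ∃ f : E2 →ₗ[ℝ] E2, Realizes f (lRes T l i) := by
  by_contra h
  have h0 := aux_dD_zero _ h
  rw [h0] at hlt
  have hK : ¬ (Kset x').Nonempty := by
    rintro ⟨y, hy⟩
    have := aux_rS_le T l i x' y hx hy
    rw [h0] at this
    linarith
  have hr : rObs (lRes T l i) x' = 0 := by
    have : {r | ∃ y ∈ Kset x', r = dD (lRes T l i) x' y} = ∅ := by
      ext r
      simp only [mem_ofPred_eq, mem_empty_iff_false, iff_false]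
      rintro ⟨y, hy, -⟩
      exact hK ⟨y, hy⟩
    unfold rObs
    rw [this, Real.sInf_empty]
  have : rS T l (T.σ i x') ≤ rObs (lRes T l i) x' := by
    refine csInf_le ⟨0, ?_⟩ ⟨i, x', hx, rfl, rfl⟩
    rintro _ ⟨_, _, _, _, rfl⟩
    apply Real.sInf_nonneg
    rintro _ ⟨y, _, rfl⟩
    exact aux_dD_nonneg _ _ _
  linarith

theorem aux_point (T : Triangulation S n) (l : Set S → ℝ) (i j : Fin n) (x' z' : E2)
    (hx : x' ∈ Dtri) (hz : z' ∈ Dtri)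
    (hlt : dD (lRes T l i) x' z' < rS T l (T.σ i x'))
    (hzj : T.σ i z' ∈ T.σ j '' Dtri) :
    T.σ i x' ∈ T.σ j '' Dtri ∧
      dTri T l j (T.σ i x') (T.σ i z') ≤ dD (lRes T l i) x' z' := by
  have hmem : ∀ e ∈ E0, z' ∈ e → x' ∈ e := by
    intro e he hze
    by_contra hxe
    have := aux_rS_le T l i x' z' hx ⟨e, ⟨he, hxe⟩, hze⟩
    linarith
  obtain ⟨z'', hz''D, hz''⟩ := hzj
  rcases aux_cases z' hz with hc | hc | ⟨e, he, hc⟩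
  · have hij : i = j := by
      rcases aux_cases z'' hz''D with hd | hd | ⟨e', he', hd⟩
      · by_contra hne
        exact (T.disj_int i j hne).ne_of_mem (mem_image_of_mem _ hc) (mem_image_of_mem _ hd)
          hz''.symm
      · exact absurd hz'' ((T.disj_vert_int i).ne_of_mem
          (mem_iUnion.2 ⟨j, mem_image_of_mem _ hd⟩) (mem_image_of_mem _ hc))
      · exact absurd hz''.symm ((T.disj_int_edge i j e' he').ne_of_mem
          (mem_image_of_mem _ hc) (mem_image_of_mem _ hd))
    subst hij
    exact ⟨mem_image_of_mem _ hx, aux_dTri_le T l i x' z' hx hz⟩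
  · have hxz : x' = z' := aux_vert z' x' hc hmem
    subst hxz
    refine ⟨⟨z'', hz''D, hz''⟩, ?_⟩
    have := aux_dTri_le T l j z'' z'' hz''D hz''D
    rw [aux_dD_self, hz''] at this
    rwa [aux_dD_self]
  · have hxe : x' ∈ e := hmem e he hc.1
    obtain ⟨e', he', heq⟩ : ∃ e' ∈ E0, T.σ i '' eo e = T.σ j '' eo e' := by
      rcases aux_cases z'' hz''D with hd | hd | ⟨e', he', hd⟩
      · exact absurd hz'' ((T.disj_int_edge j i e he).ne_of_mem
          (mem_image_of_mem _ hd) (mem_image_of_mem _ hc))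
      · exact absurd hz'' ((T.disj_vert_edge i e he).ne_of_mem
          (mem_iUnion.2 ⟨j, mem_image_of_mem _ hd⟩) (mem_image_of_mem _ hc))
      · refine ⟨e', he', (T.edge_eq_or_disjoint i j e he e' he').resolve_right fun hdis => ?_⟩
        exact hdis.ne_of_mem (mem_image_of_mem _ hc) (mem_image_of_mem _ hd) hz''.symm
    obtain ⟨A, hA, hσ⟩ := T.glue i j e he e' he' heq
    have hAx : A x' ∈ e' := hA ▸ mem_image_of_mem _ hxe
    have hAz : A z' ∈ e' := hA ▸ mem_image_of_mem _ hc.1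
    have hAxD := aux_edge_sub e' he' hAx
    have hAzD := aux_edge_sub e' he' hAz
    refine ⟨⟨A x', hAxD, hσ x' hxe⟩, ?_⟩
    have h1 := aux_dTri_le T l j (A x') (A z') hAxD hAzD
    rw [hσ x' hxe, hσ z' hc.1] at h1
    refine h1.trans ?_
    by_cases hj : ∃ f : E2 →ₗ[ℝ] E2, Realizes f (lRes T l j)
    · obtain ⟨fj, hfj, hdj⟩ := aux_dD_eq _ hj
      obtain ⟨fi, hfi, hdi⟩ := aux_dD_eq _ (aux_realizable T l i x' z' hx hlt)
      rw [hdj, hdi]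
      have hle : lRes T l i e = lRes T l j e' := by
        have : T.σ i '' e = T.σ j '' e' := by
          rw [← hA, image_image]
          exact image_congr fun y hy => (hσ y hy).symm
        unfold lRes
        rw [this]
      obtain ⟨a, b, rfl, hab⟩ := aux_edge e he
      obtain ⟨c, d, rfl, hcd⟩ := aux_edge e' he'
      exact aux_glue fi fj A a b c d x' z' hA
        (by rw [hab _ _ hfi, hcd _ _ hfj, hle]) hxe hc.1
    · rw [aux_dD_zero _ hj]
      exact aux_dD_nonneg _ _ _

theorem aux_half (T : Triangulation S n) (l : Set S → ℝ) (i j : Fin n) (x z : S)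
    (hx : x ∈ T.σ i '' Dtri) (hz : z ∈ T.σ i '' Dtri)
    (hlt : dTri T l i x z < rS T l x) (hzj : z ∈ T.σ j '' Dtri) :
    x ∈ T.σ j '' Dtri ∧ dTri T l j x z ≤ dTri T l i x z := by
  have hne : { r | ∃ x' ∈ Dtri, ∃ y' ∈ Dtri,
      T.σ i x' = x ∧ T.σ i y' = z ∧ r = dD (lRes T l i) x' y' }.Nonempty := by
    obtain ⟨x', hx', hx''⟩ := hx
    obtain ⟨z', hz', hz''⟩ := hz
    exact ⟨_, x', hx', z', hz', hx'', hz'', rfl⟩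
  obtain ⟨r, ⟨x', hx', z', hz', rfl, rfl, rfl⟩, hr⟩ := exists_lt_of_csInf_lt hne hlt
  have h0 := aux_point T l i j x' z' hx' hz' hr hzj
  refine ⟨h0.1, le_csInf hne ?_⟩
  rintro _ ⟨u, hu, v, hv, hux, hvz, rfl⟩
  by_cases hh : dD (lRes T l i) u v < rS T l (T.σ i x')
  · have := (aux_point T l i j u v hu hv (by rwa [hux]) (by rwa [hvz])).2
    rwa [hux, hvz] at this
  · linarith [h0.2]

/-- Corollary 3.3: if `x, z ∈ σᵢ(D)`, `dᵢ(x,z) < r(x)`, and `z ∈ σⱼ(D)`,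
then `x ∈ σⱼ(D)` and `dᵢ(x,z) = dⱼ(x,z)`. -/
theorem dTri_eq_of_lt_rS
    {S : Type} [TopologicalSpace S] [CompactSpace S] [T2Space S] [ConnectedSpace S]
    {n : ℕ} (T : Triangulation S n) (l : Set S → ℝ) (hl : TriIneqT T l)
    (i j : Fin n) (x z : S)
    (hx : x ∈ T.σ i '' Dtri) (hz : z ∈ T.σ i '' Dtri)
    (hlt : dTri T l i x z < rS T l x)
    (hzj : z ∈ T.σ j '' Dtri) :
    x ∈ T.σ j '' Dtri ∧ dTri T l i x z = dTri T l j x z := by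
  obtain ⟨hxj, h1⟩ := aux_half T l i j x z hx hz hlt hzj
  exact ⟨hxj, le_antisymm (aux_half T l j i x z hxj hzj (h1.trans_lt hlt) hz).2 h1⟩
end
end

section
/- The function d[l] : S × S → [0,∞] is a metric on S: for all x, y, z ∈ S, (a) d[l](x,y) < ∞; (b) d[l](x,y) ≥ 0; (c) d[l](x,y) = 0 if and only if x = y; (d) d[l](x,y) = d[l](y,x); (e) d[l](x,z) ≤ d[l](x,y) + d[l](y,z). -/
noncomputable section

open Set
open scoped ENNReal

variable {S : Type} [TopologicalSpace S] {n : ℕ}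

/-! ### Geometry of the reference triangle -/

def vtx : Fin 3 → E2 := ![p0, p1, p2]

lemma vtx_indep : AffineIndependent ℝ vtx := by
  unfold vtx
  rw [affineIndependent_iff_not_collinear_set]
  intro h
  rw [collinear_iff_of_mem (p₀ := p0) (by simp)] at h
  obtain ⟨v, hv⟩ := h
  obtain ⟨r, hr⟩ := hv p1 (by simp)
  obtain ⟨s, hs⟩ := hv p2 (by simp)
  have h1 := congrArg (fun z : E2 => z 0) hr
  have h2 := congrArg (fun z : E2 => z 1) hr
  have h3 := congrArg (fun z : E2 => z 1) hs
  simp [p0, p1, p2] at h1 h2 h3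
  rcases h2 with h2 | h2
  · simp [h2] at h1
  · simp [h2] at h3

def triB : AffineBasis (Fin 3) ℝ E2 :=
  ⟨vtx, vtx_indep, by
    rw [vtx_indep.affineSpan_eq_top_iff_card_eq_finrank_add_one]
    simp⟩

lemma triB_apply (a : Fin 3) : triB a = vtx a := rfl

lemma range_vtx : range vtx = {p0, p1, p2} := by
  unfold vtx
  ext z
  simp only [mem_range, mem_insert_iff, mem_singleton_iff]
  constructor
  · rintro ⟨a, rfl⟩
    fin_cases a <;> simp
  · rintro (rfl | rfl | rfl)
    · exact ⟨0, rfl⟩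
    · exact ⟨1, rfl⟩
    · exact ⟨2, rfl⟩

/-- barycentric coordinates -/
def lam (a : Fin 3) (z : E2) : ℝ := triB.coord a z

lemma lam_vtx (a b : Fin 3) : lam a (vtx b) = if a = b then 1 else 0 := by
  rw [lam, ← triB_apply, triB.coord_apply]

lemma lam_sum (z : E2) : lam 0 z + lam 1 z + lam 2 z = 1 := by
  have := triB.sum_coord_apply_eq_one z
  rwa [Fin.sum_univ_three] at this

lemma lam_ext {z w : E2} (h : ∀ a, lam a z = lam a w) : z = w := triB.ext_elem h

lemma lam_lineMap (a : Fin 3) (z w : E2) (t : ℝ) :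
    lam a (AffineMap.lineMap z w t) = (1 - t) * lam a z + t * lam a w := by
  unfold lam
  rw [AffineMap.apply_lineMap, AffineMap.lineMap_apply_ring]

lemma lam_contDiff (a : Fin 3) : ContDiff ℝ 1 (lam a) :=
  (smooth_barycentric_coord triB a).of_le (by simp)

lemma mem_Dtri {z : E2} : z ∈ Dtri ↔ ∀ a, 0 ≤ lam a z := by
  have h := triB.convexHull_eq_nonneg_coord
  have h2 : Dtri = convexHull ℝ (range triB) := by
    rw [Dtri, ← range_vtx]; rfl
  rw [h2, h]; rfl

lemma mem_Do {z : E2} : z ∈ Do ↔ ∀ a, 0 < lam a z := by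
  have h := triB.interior_convexHull
  have h2 : Dtri = convexHull ℝ (range triB) := by
    rw [Dtri, ← range_vtx]; rfl
  rw [Do, h2, h]; rfl

lemma mem_V0 {z : E2} : z ∈ V0 ↔ ∃ a, z = vtx a := by
  rw [V0, ← range_vtx]
  simp [eq_comm]

lemma Do_sub : Do ⊆ Dtri := interior_subset

lemma vtx_mem (a : Fin 3) : vtx a ∈ Dtri := by
  rw [mem_Dtri]; intro b; rw [lam_vtx]; split_ifs <;> norm_num

/-- point on the edge from `a` to `b` -/
def ept (a b : Fin 3) (t : ℝ) : E2 := AffineMap.lineMap (vtx a) (vtx b) t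

lemma lam_ept (c a b : Fin 3) (t : ℝ) :
    lam c (ept a b t) = (1 - t) * (if c = a then 1 else 0) + t * (if c = b then 1 else 0) := by
  rw [ept, lam_lineMap, lam_vtx, lam_vtx]

lemma ept_zero (a b : Fin 3) : ept a b 0 = vtx a := by simp [ept]
lemma ept_one (a b : Fin 3) : ept a b 1 = vtx b := by simp [ept]
lemma ept_symm (a b : Fin 3) (t : ℝ) : ept b a t = ept a b (1 - t) := by
  simp [ept, AffineMap.lineMap_apply_one_sub]

lemma ept_mem {a b : Fin 3} {t : ℝ} (ht : t ∈ Icc (0 : ℝ) 1) : ept a b t ∈ Dtri := by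
  rw [mem_Dtri]; intro c; rw [lam_ept]
  have h0 := ht.1
  have h1 : 0 ≤ 1 - t := by linarith [ht.2]
  split_ifs <;> nlinarith

lemma ept_inj {a b : Fin 3} (hab : a ≠ b) {t u : ℝ} (h : ept a b t = ept a b u) : t = u := by
  have := congrArg (lam b) h
  rw [lam_ept, lam_ept] at this
  simpa [hab.symm] using this

def edg (a b : Fin 3) : Set E2 := segment ℝ (vtx a) (vtx b)

lemma mem_edg {a b : Fin 3} {z : E2} : z ∈ edg a b ↔ ∃ t ∈ Icc (0 : ℝ) 1, ept a b t = z := by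
  rw [edg, segment_eq_image_lineMap]; rfl

lemma edg_mem {a b : Fin 3} (hab : a ≠ b) : edg a b ∈ E0 := by
  have h1 : e01 = edg 0 1 := rfl
  have h2 : e12 = edg 1 2 := rfl
  have h3 : e02 = edg 0 2 := rfl
  have hs : ∀ a b, edg a b = edg b a := fun a b => segment_symm ℝ _ _
  rw [E0, h1, h2, h3]
  fin_cases a <;> fin_cases b <;> simp at hab ⊢
  · rw [hs 1 0]; simp
  · rw [hs 2 0]; simp
  · rw [hs 2 1]; simp

lemma edg_of_mem {e : Set E2} (he : e ∈ E0) : ∃ a b, a ≠ b ∧ e = edg a b := by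
  rcases he with h | h | h
  · exact ⟨0, 1, by decide, h⟩
  · exact ⟨1, 2, by decide, h⟩
  · exact ⟨0, 2, by decide, h⟩

lemma ept_mem_eo {a b : Fin 3} (hab : a ≠ b) {t : ℝ} (ht : t ∈ Ioo (0 : ℝ) 1) :
    ept a b t ∈ eo (edg a b) := by
  refine ⟨mem_edg.2 ⟨t, Ioo_subset_Icc_self ht, rfl⟩, ?_⟩
  rw [mem_V0]
  rintro ⟨c, hc⟩
  have := congrArg (lam c) hc
  rw [lam_ept, lam_vtx] at this
  have h0 := ht.1
  have h1 := ht.2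
  by_cases h : c = a
  · subst h; simp [hab] at this; linarith
  · by_cases h' : c = b
    · subst h'; simp [h] at this; linarith
    · simp [h, h'] at this

lemma eo_edg {e : Set E2} (he : e ∈ E0) {z : E2} (hz : z ∈ eo e) :
    ∃ a b, a ≠ b ∧ ∃ t ∈ Ioo (0 : ℝ) 1, z = ept a b t := by
  obtain ⟨a, b, hab, rfl⟩ := edg_of_mem he
  obtain ⟨h1, h2⟩ := hz
  obtain ⟨t, ht, rfl⟩ := mem_edg.1 h1
  refine ⟨a, b, hab, t, ⟨lt_of_le_of_ne ht.1 ?_, lt_of_le_of_ne ht.2 ?_⟩, rfl⟩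
  · rintro rfl; exact h2 (mem_V0.2 ⟨a, ept_zero a b⟩)
  · rintro rfl; exact h2 (mem_V0.2 ⟨b, ept_one a b⟩)

lemma classify_aux {a b c : Fin 3} (hab : a ≠ b) (hac : a ≠ c) (hbc : b ≠ c) {z : E2}
    (hz : z ∈ Dtri) (h : lam c z = 0) : z ∈ edg a b := by
  have hs : lam a z + lam b z + lam c z = 1 := by
    have := lam_sum z
    fin_cases a <;> fin_cases b <;> fin_cases c <;> simp at * <;> linarith
  have hn := mem_Dtri.1 hz
  refine mem_edg.2 ⟨lam b z, ⟨hn b, by linarith [hn a]⟩, lam_ext fun d => ?_⟩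
  rw [lam_ept]
  have hd : d = a ∨ d = b ∨ d = c := by
    revert hab hac hbc; clear hs h; revert a b c d; decide
  rcases hd with rfl | rfl | rfl
  · simp [hab]; linarith
  · simp [hab.symm]
  · simp [hac.symm, hbc.symm, h]

lemma edg_cases {a b : Fin 3} (hab : a ≠ b) {z : E2} (h : z ∈ edg a b) :
    z ∈ V0 ∨ ∃ e ∈ E0, z ∈ eo e := by
  by_cases hv : z ∈ V0
  · exact Or.inl hv
  · exact Or.inr ⟨_, edg_mem hab, h, hv⟩

lemma classify {z : E2} (hz : z ∈ Dtri) :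
    (∃ a, z = vtx a) ∨ (∃ a b, a ≠ b ∧ ∃ t ∈ Ioo (0 : ℝ) 1, z = ept a b t) ∨ z ∈ Do := by
  by_cases hd : z ∈ Do
  · exact Or.inr (Or.inr hd)
  have : ∃ a b, a ≠ b ∧ z ∈ edg a b := by
    rw [mem_Do] at hd
    push Not at hd
    obtain ⟨c, hc⟩ := hd
    have hc0 : lam c z = 0 := le_antisymm hc (mem_Dtri.1 hz c)
    fin_cases c
    · exact ⟨1, 2, by decide, classify_aux (c := 0) (by decide) (by decide) (by decide) hz hc0⟩
    · exact ⟨0, 2, by decide, classify_aux (c := 1) (by decide) (by decide) (by decide) hz hc0⟩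
    · exact ⟨0, 1, by decide, classify_aux (c := 2) (by decide) (by decide) (by decide) hz hc0⟩
  obtain ⟨a, b, hab, h⟩ := this
  rcases edg_cases hab h with h | ⟨e, he, h⟩
  · exact Or.inl (mem_V0.1 h)
  · exact Or.inr (Or.inl (eo_edg he h))

lemma Dtri_compact : IsCompact Dtri :=
  Set.Finite.isCompact_convexHull ℝ (Set.toFinite _)

lemma lip_of_contDiff {φ : E2 → ℝ} (h : ContDiff ℝ 1 φ) :
    ∃ K : ℝ, 0 < K ∧ ∀ z ∈ Dtri, ∀ w ∈ Dtri, |φ z - φ w| ≤ K * dist z w := by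
  obtain ⟨K, hK⟩ := (h.locallyLipschitz.locallyLipschitzOn).exists_lipschitzOnWith_of_compact
    Dtri_compact
  refine ⟨K + 1, by positivity, fun z hz w hw => ?_⟩
  have := hK.dist_le_mul z hz w hw
  rw [Real.dist_eq] at this
  nlinarith [dist_nonneg (x := z) (y := w)]

/-! ### The linear realization -/

lemma realizes_exists {l : Set E2 → ℝ} (h : TriIneq l) : ∃ f : E2 →ₗ[ℝ] E2, Realizes f l := by
  obtain ⟨hp, ht⟩ := h
  have ha := hp e01 (by simp [E0])
  have hc := hp e12 (by simp [E0])
  have hb := hp e02 (by simp [E0])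
  have h1 := ht e01 e12 e02 rfl
  have h2 := ht e01 e02 e12 (by rw [E0, Set.pair_comm])
  have h3 := ht e12 e02 e01 (by ext x; simp [E0]; tauto)
  set a := l e01
  set c := l e12
  set b := l e02
  obtain ⟨u, hu⟩ : ∃ u, u = (a ^ 2 + b ^ 2 - c ^ 2) / (2 * a) := ⟨_, rfl⟩
  have hu' : 2 * a * u = a ^ 2 + b ^ 2 - c ^ 2 := by rw [hu]; field_simp
  have hv0 : 0 ≤ b ^ 2 - u ^ 2 := by
    have : 4 * a ^ 2 * (b ^ 2 - u ^ 2) = ((a + b) ^ 2 - c ^ 2) * (c ^ 2 - (a - b) ^ 2) := by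
      linear_combination (-(2 * a * u) - (a ^ 2 + b ^ 2 - c ^ 2)) * hu'
    have h4 : 0 ≤ ((a + b) ^ 2 - c ^ 2) * (c ^ 2 - (a - b) ^ 2) :=
      mul_nonneg (by nlinarith) (by nlinarith)
    by_contra hneg
    push Not at hneg
    nlinarith [sq_pos_of_pos ha]
  obtain ⟨v, hv⟩ : ∃ v, v = Real.sqrt (b ^ 2 - u ^ 2) := ⟨_, rfl⟩
  have hv' : v ^ 2 = b ^ 2 - u ^ 2 := by rw [hv, Real.sq_sqrt hv0]
  have s3 : Real.sqrt 3 ^ 2 = 3 := Real.sq_sqrt (by norm_num)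
  have s3p : Real.sqrt 3 ≠ 0 := by positivity
  let M : Matrix (Fin 2) (Fin 2) ℝ :=
    !![a, (2 * u - a) / Real.sqrt 3; 0, 2 * v / Real.sqrt 3]
  refine ⟨M.toEuclideanLin, ?_⟩
  have f0 : M.toEuclideanLin p0 = !₂[0, 0] := by
    ext i; fin_cases i <;> simp [M, p0, Matrix.toLpLin_apply]
  have f1 : M.toEuclideanLin p1 = !₂[a, 0] := by
    ext i; fin_cases i <;> simp [M, p1, Matrix.toLpLin_apply]
  have f2 : M.toEuclideanLin p2 = !₂[u, v] := by
    ext i; fin_cases i <;> simp [M, p2, Matrix.toLpLin_apply] <;> field_simp <;> ring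
  rw [Realizes, f0, f1, f2]
  refine ⟨?_, ?_, ?_⟩
  · rw [EuclideanSpace.dist_eq, Real.sqrt_eq_iff_mul_self_eq (by positivity) ha.le]
    simp [Real.dist_eq, sq_abs, a]; ring
  · rw [EuclideanSpace.dist_eq, Real.sqrt_eq_iff_mul_self_eq (by positivity) hc.le]
    simp [Real.dist_eq, sq_abs]
    nlinarith
  · rw [EuclideanSpace.dist_eq, Real.sqrt_eq_iff_mul_self_eq (by positivity) hb.le]
    simp [Real.dist_eq, sq_abs]
    nlinarith

lemma realizes_inj {l : Set E2 → ℝ} (h : TriIneq l) {f : E2 →ₗ[ℝ] E2} (hf : Realizes f l) :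
    LinearMap.ker f = ⊥ := by
  obtain ⟨hp, ht⟩ := h
  have ha := hp e01 (by simp [E0])
  have hc := hp e12 (by simp [E0])
  have hb := hp e02 (by simp [E0])
  have h1 := ht e01 e12 e02 rfl
  have h2 := ht e01 e02 e12 (by rw [E0, Set.pair_comm])
  have h3 := ht e12 e02 e01 (by ext x; simp [E0]; tauto)
  obtain ⟨ra, rc, rb⟩ := hf
  set a := l e01
  set c := l e12
  set b := l e02
  have f0 : f p0 = 0 := by
    have : p0 = 0 := by ext i; fin_cases i <;> simp [p0]
    rw [this, map_zero]
  rw [f0, dist_zero_left] at ra rb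
  rw [dist_eq_norm] at rc
  set g := inner ℝ (f p1) (f p2) with hg
  have hgc : c ^ 2 = a ^ 2 - 2 * g + b ^ 2 := by
    rw [← ra, ← rb, ← rc]; exact norm_sub_sq_real _ _
  have hdet : 0 < a ^ 2 * b ^ 2 - g ^ 2 := by
    have h4 : 4 * (a ^ 2 * b ^ 2 - g ^ 2) = ((a + b) ^ 2 - c ^ 2) * (c ^ 2 - (a - b) ^ 2) := by
      rw [hgc]; ring
    have h5 : 0 < ((a + b) ^ 2 - c ^ 2) * (c ^ 2 - (a - b) ^ 2) :=
      mul_pos (by nlinarith) (by nlinarith)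
    linarith
  rw [LinearMap.ker_eq_bot']
  intro z hz
  have s3p : Real.sqrt 3 ≠ 0 := by positivity
  obtain ⟨β, hβ⟩ : ∃ β, β = 2 * z 1 / Real.sqrt 3 := ⟨_, rfl⟩
  obtain ⟨α, hα⟩ : ∃ α, α = z 0 - z 1 / Real.sqrt 3 := ⟨_, rfl⟩
  have hzz : z = α • p1 + β • p2 := by
    ext i; fin_cases i
    · simp [p1, p2, hα, hβ]; field_simp; ring
    · simp [p1, p2, hα, hβ]; field_simp
  have hf0 : α • f p1 + β • f p2 = 0 := by rw [← hz, hzz]; simp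
  have i1 : α * a ^ 2 + β * g = 0 := by
    have := congrArg (fun w => inner ℝ (f p1) w) hf0
    simpa [inner_add_right, inner_smul_right, ra, ← hg] using this
  have i2 : α * g + β * b ^ 2 = 0 := by
    have := congrArg (fun w => inner ℝ (f p2) w) hf0
    simp only [inner_add_right, inner_smul_right, real_inner_self_eq_norm_sq, rb, inner_zero_right,
      real_inner_comm (f p1) (f p2)] at this
    exact this
  have hβ0 : β = 0 := by
    have : β * (a ^ 2 * b ^ 2 - g ^ 2) = 0 := by linear_combination a ^ 2 * i2 - g * i1
    rcases mul_eq_zero.1 this with h | h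
    · exact h
    · exact absurd h hdet.ne'
  have hα0 : α = 0 := by
    rw [hβ0] at i1
    have : α * a ^ 2 = 0 := by linarith
    rcases mul_eq_zero.1 this with h | h
    · exact h
    · exact absurd h (by positivity)
  rw [hzz, hα0, hβ0]; simp

lemma dD_lower {l : Set E2 → ℝ} (h : TriIneq l) :
    ∃ c : ℝ, 0 < c ∧ ∀ z w, c * dist z w ≤ dD l z w := by
  have hex := realizes_exists h
  have hk := realizes_inj h hex.choose_spec
  obtain ⟨K, hK, hA⟩ := hex.choose.exists_antilipschitzWith hk
  refine ⟨(K : ℝ)⁻¹, by positivity, fun z w => ?_⟩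
  have h1 := hA.le_mul_dist z w
  have : dD l z w = dist (hex.choose z) (hex.choose w) := by
    unfold dD; rw [dif_pos hex]
  rw [this, inv_mul_le_iff₀ (by exact_mod_cast hK)]
  exact h1

lemma dD_nonneg (l : Set E2 → ℝ) (z w : E2) : 0 ≤ dD l z w := by
  unfold dD; split_ifs
  · exact dist_nonneg
  · exact le_rfl

lemma dD_comm (l : Set E2 → ℝ) (z w : E2) : dD l z w = dD l w z := by
  unfold dD; split_ifs
  · exact dist_comm _ _
  · rfl

/-! ### Chains -/

lemma lRes_triIneq {T : Triangulation S n} {l : Set S → ℝ} (hl : TriIneqT T l) (i : Fin n) :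
    TriIneq (lRes T l i) :=
  ⟨fun e he => hl.1 i e he, fun e₁ e₂ e₃ h => hl.2 i e₁ e₂ e₃ h⟩

lemma dTri_nonneg (T : Triangulation S n) (l : Set S → ℝ) (i : Fin n) (x y : S) :
    0 ≤ dTri T l i x y := by
  apply Real.sInf_nonneg
  rintro r ⟨x', -, y', -, -, -, rfl⟩
  exact dD_nonneg _ _ _

lemma dTri_comm (T : Triangulation S n) (l : Set S → ℝ) (i : Fin n) (x y : S) :
    dTri T l i x y = dTri T l i y x := by
  unfold dTri
  congr 1
  ext r
  constructor
  · rintro ⟨x', hx, y', hy, h1, h2, h3⟩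
    exact ⟨y', hy, x', hx, h2, h1, by rw [h3, dD_comm]⟩
  · rintro ⟨x', hx, y', hy, h1, h2, h3⟩
    exact ⟨y', hy, x', hx, h2, h1, by rw [h3, dD_comm]⟩

lemma chain_nonneg {T : Triangulation S n} {l : Set S → ℝ} {x y : S} {r : ℝ}
    (h : r ∈ chainSums T l x y) : 0 ≤ r := by
  obtain ⟨k, c, idx, -, -, -, rfl⟩ := h
  exact Finset.sum_nonneg fun j _ => dTri_nonneg _ _ _ _ _

lemma chain_refl {T : Triangulation S n} {l : Set S → ℝ} (i : Fin n) (x : S) :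
    0 ∈ chainSums T l x x :=
  ⟨0, fun _ => x, fun _ => i, rfl, rfl, by simp, by simp⟩

lemma chain_symm {T : Triangulation S n} {l : Set S → ℝ} {x y : S} {r : ℝ}
    (h : r ∈ chainSums T l x y) : r ∈ chainSums T l y x := by
  obtain ⟨k, c, idx, h0, hk, hm, rfl⟩ := h
  refine ⟨k, fun j => c (k - j), fun j => idx (k - 1 - j), by simpa using hk, by simpa using h0,
    ?_, ?_⟩
  · intro j hj
    have := hm (k - 1 - j) (by omega)
    rw [show k - 1 - j + 1 = k - j by omega] at this
    simp only [show k - (j + 1) = k - 1 - j by omega]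
    exact ⟨this.2, this.1⟩
  · rw [← Finset.sum_range_reflect]
    apply Finset.sum_congr rfl
    intro j hj
    have hj' := Finset.mem_range.1 hj
    simp only [show k - (j + 1) = k - 1 - j by omega, show k - 1 - j + 1 = k - j by omega]
    exact dTri_comm _ _ _ _ _

lemma chain_trans {T : Triangulation S n} {l : Set S → ℝ} {x y z : S} {r s : ℝ}
    (h : r ∈ chainSums T l x y) (h' : s ∈ chainSums T l y z) : r + s ∈ chainSums T l x z := by
  obtain ⟨k, c, idx, h0, hk, hm, rfl⟩ := h
  obtain ⟨k', c', idx', h0', hk', hm', rfl⟩ := h'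
  have key : ∀ j, (if k + j ≤ k then c (k + j) else c' (k + j - k)) = c' j := by
    intro j
    by_cases hj : j = 0
    · subst hj; simp [hk, h0']
    · rw [if_neg (by omega)]; congr 1; omega
  refine ⟨k + k', fun j => if j ≤ k then c j else c' (j - k),
    fun j => if j < k then idx j else idx' (j - k), by simpa using h0, ?_, ?_, ?_⟩
  · simp only [key, hk']
  · intro j hj
    by_cases hjk : j < k
    · simp only [if_pos hjk, if_pos hjk.le, if_pos (Nat.succ_le_of_lt hjk)]
      exact hm j hjk
    · obtain ⟨m, rfl⟩ := Nat.exists_eq_add_of_le (not_lt.1 hjk)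
      have h1 := key m
      have h2 := key (m + 1)
      rw [← add_assoc] at h2
      simp only [Nat.add_sub_cancel_left] at h1
      simp only [h1, h2, if_neg hjk, Nat.add_sub_cancel_left]
      exact hm' m (by omega)
  · rw [Finset.sum_range_add]
    congr 1
    · apply Finset.sum_congr rfl
      intro j hj
      have hjk := Finset.mem_range.1 hj
      simp only [if_pos hjk, if_pos hjk.le, if_pos (Nat.succ_le_of_lt hjk)]
    · apply Finset.sum_congr rfl
      intro m hm
      have h1 := key m
      have h2 := key (m + 1)
      rw [← add_assoc] at h2
      simp only [Nat.add_sub_cancel_left] at h1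
      have h3 : ¬ (k + m < k) := by omega
      simp only [h1, h2, if_neg h3, Nat.add_sub_cancel_left]

lemma cover_D (T : Triangulation S n) (x : S) : ∃ i, ∃ z ∈ Dtri, T.σ i z = x := by
  have hx : x ∈ (univ : Set S) := mem_univ x
  rw [← T.cover] at hx
  rcases hx with (hx | hx) | hx
  · obtain ⟨i, z, hz, rfl⟩ := mem_iUnion.1 hx
    obtain ⟨a, rfl⟩ := mem_V0.1 hz
    exact ⟨i, _, vtx_mem a, rfl⟩
  · obtain ⟨i, z, hz, rfl⟩ := mem_iUnion.1 hx
    exact ⟨i, z, Do_sub hz, rfl⟩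
  · obtain ⟨i, hx⟩ := mem_iUnion.1 hx
    obtain ⟨e, hx⟩ := mem_iUnion.1 hx
    obtain ⟨he, z, hz, rfl⟩ := mem_iUnion.1 hx
    obtain ⟨a, b, hab, t, ht, rfl⟩ := eo_edg he hz
    exact ⟨i, _, ept_mem (Ioo_subset_Icc_self ht), rfl⟩

lemma chain_step {T : Triangulation S n} {l : Set S → ℝ} {i : Fin n} {x y : S}
    (hx : x ∈ T.σ i '' Dtri) (hy : y ∈ T.σ i '' Dtri) : (chainSums T l x y).Nonempty := by
  refine ⟨_, 1, fun j => if j = 0 then x else y, fun _ => i, rfl, rfl, ?_, rfl⟩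
  intro j hj
  have : j = 0 := by omega
  subst this
  exact ⟨by simpa using hx, by simpa using hy⟩

lemma chain_nonempty [T2Space S] [ConnectedSpace S] (T : Triangulation S n) (l : Set S → ℝ)
    (x y : S) : (chainSums T l x y).Nonempty := by
  classical
  have hcl : ∀ i, IsClosed (T.σ i '' Dtri) := fun i =>
    (Dtri_compact.image_of_continuousOn (T.continuousOn i)).isClosed
  obtain ⟨i0, -⟩ := cover_D T x
  set R : Set S := {y | (chainSums T l x y).Nonempty} with hR
  set J : Set (Fin n) := {i | ∃ y ∈ T.σ i '' Dtri, y ∈ R} with hJ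
  have hstep : ∀ i ∈ J, T.σ i '' Dtri ⊆ R := by
    rintro i ⟨y, hy, r, hr⟩ w hw
    obtain ⟨s, hs⟩ := chain_step (l := l) hy hw
    exact ⟨_, chain_trans hr hs⟩
  have e1 : R = ⋃ i ∈ J, T.σ i '' Dtri := by
    apply Subset.antisymm
    · intro w hw
      obtain ⟨i, z, hz, rfl⟩ := cover_D T w
      exact mem_biUnion (x := i) ⟨_, ⟨z, hz, rfl⟩, hw⟩ ⟨z, hz, rfl⟩
    · exact iUnion₂_subset hstep
  have e2 : Rᶜ = ⋃ i ∈ Jᶜ, T.σ i '' Dtri := by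
    apply Subset.antisymm
    · intro w hw
      obtain ⟨i, z, hz, rfl⟩ := cover_D T w
      exact mem_biUnion (x := i) (fun hi => hw (hstep i hi ⟨z, hz, rfl⟩)) ⟨z, hz, rfl⟩
    · exact iUnion₂_subset fun i hi w hw hwR => hi ⟨w, hw, hwR⟩
  have c1 : IsClosed R := by
    rw [e1]; exact (Set.toFinite J).isClosed_biUnion fun i _ => hcl i
  have c2 : IsClosed Rᶜ := by
    rw [e2]; exact (Set.toFinite Jᶜ).isClosed_biUnion fun i _ => hcl i
  have hclopen : IsClopen R := ⟨c1, isClosed_compl_iff.1 c2⟩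
  have : R = univ := hclopen.eq_univ ⟨x, 0, chain_refl i0 x⟩
  have hy : y ∈ R := by rw [this]; trivial
  exact hy

/-! ### Separation by compatible functions -/

/-- A family of functions on the triangles descending to the glued space. -/
def Compat (T : Triangulation S n) (φ : Fin n → E2 → ℝ) : Prop :=
  ∀ i j, ∀ z ∈ Dtri, ∀ w ∈ Dtri, T.σ i z = T.σ j w → φ i z = φ j w

lemma dGlue_zero_compat [T2Space S] [ConnectedSpace S] {T : Triangulation S n} {l : Set S → ℝ}
    (hl : TriIneqT T l)
    {φ : Fin n → E2 → ℝ} (hs : ∀ i, ContDiff ℝ 1 (φ i)) (hc : Compat T φ) {i j : Fin n} {z w : E2}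
    (hz : z ∈ Dtri) (hw : w ∈ Dtri) (h : dGlue T l (T.σ i z) (T.σ j w) = 0) : φ i z = φ j w := by
  choose K hK0 hK using fun i => lip_of_contDiff (hs i)
  choose c hc0 hcd using fun i => dD_lower (lRes_triIneq hl i)
  obtain ⟨ε, hε, hεi⟩ : ∃ ε : ℝ, 0 < ε ∧ ∀ i, ε ≤ c i / K i := by
    have : Nonempty (Fin n) := ⟨i⟩
    obtain ⟨m, hm⟩ := Finite.exists_min (fun i => c i / K i)
    exact ⟨c m / K m, div_pos (hc0 m) (hK0 m), hm⟩
  choose I Z hZ hIZ using cover_D T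
  set Φ : S → ℝ := fun s => φ (I s) (Z s) with hΦ
  have hΦσ : ∀ i, ∀ z ∈ Dtri, Φ (T.σ i z) = φ i z := fun i z hz =>
    hc _ _ _ (hZ _) _ hz (hIZ _)
  have hD : ∀ i, ∀ x ∈ T.σ i '' Dtri, ∀ y ∈ T.σ i '' Dtri, ε * |Φ x - Φ y| ≤ dTri T l i x y := by
    rintro i x ⟨x', hx', hxx⟩ y ⟨y', hy', hyy⟩
    refine le_csInf ⟨dD (lRes T l i) x' y', x', hx', y', hy', hxx, hyy, rfl⟩ ?_
    rintro r ⟨u, hu, v, hv, rfl, rfl, rfl⟩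
    rw [hΦσ i u hu, hΦσ i v hv]
    have h1 := hK i u hu v hv
    have h2 := hcd i u v
    calc ε * |φ i u - φ i v| ≤ c i / K i * (K i * dist u v) := by
          apply mul_le_mul (hεi i) h1 (abs_nonneg _) (div_pos (hc0 i) (hK0 i)).le
      _ = c i * dist u v := by have := (hK0 i).ne'; field_simp
      _ ≤ _ := h2
  have hlow : ε * |Φ (T.σ i z) - Φ (T.σ j w)| ≤ dGlue T l (T.σ i z) (T.σ j w) := by
    apply le_csInf (chain_nonempty T l _ _)
    rintro r ⟨k, p, idx, h0, hk, hm, rfl⟩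
    rw [← h0, ← hk]
    clear h0 hk
    induction k with
    | zero => simp
    | succ k ih =>
      rw [Finset.sum_range_succ]
      have h1 := ih fun j hj => hm j (by omega)
      have h2 := hD _ _ (hm k (by omega)).1 _ (hm k (by omega)).2
      have h3 := abs_sub_le (Φ (p 0)) (Φ (p k)) (Φ (p (k + 1)))
      nlinarith
  rw [h, hΦσ i z hz, hΦσ j w hw] at hlow
  have : |φ i z - φ j w| ≤ 0 := by
    by_contra hneg
    push Not at hneg
    nlinarith [mul_pos hε hneg]
  linarith [abs_nonpos_iff.1 this]

lemma T_v_int (T : Triangulation S n) {i j : Fin n} {a : Fin 3} {w : E2} (hw : w ∈ Do) :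
    T.σ i (vtx a) ≠ T.σ j w := fun h =>
  disjoint_left.1 (T.disj_vert_int j)
    (mem_iUnion.2 ⟨i, _, mem_V0.2 ⟨a, rfl⟩, h⟩) ⟨w, hw, rfl⟩

lemma T_v_edge (T : Triangulation S n) {i j : Fin n} {a b c : Fin 3} (hbc : b ≠ c) {t : ℝ}
    (ht : t ∈ Ioo (0 : ℝ) 1) : T.σ i (vtx a) ≠ T.σ j (ept b c t) := fun h =>
  disjoint_left.1 (T.disj_vert_edge j _ (edg_mem hbc))
    (mem_iUnion.2 ⟨i, _, mem_V0.2 ⟨a, rfl⟩, h⟩) ⟨_, ept_mem_eo hbc ht, rfl⟩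

lemma T_int_edge (T : Triangulation S n) {i j : Fin n} {b c : Fin 3} {w : E2} (hw : w ∈ Do)
    (hbc : b ≠ c) {t : ℝ} (ht : t ∈ Ioo (0 : ℝ) 1) : T.σ i w ≠ T.σ j (ept b c t) := fun h =>
  disjoint_left.1 (T.disj_int_edge i j _ (edg_mem hbc)) ⟨w, hw, rfl⟩
    ⟨_, ept_mem_eo hbc ht, h.symm⟩

lemma T_int_int (T : Triangulation S n) {i j : Fin n} {z w : E2} (hz : z ∈ Do) (hw : w ∈ Do)
    (h : T.σ i z = T.σ j w) : i = j ∧ z = w := by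
  by_cases hij : i = j
  · subst hij; exact ⟨rfl, T.inj_int i hz hw h⟩
  · exact absurd (disjoint_left.1 (T.disj_int i j hij) ⟨z, hz, rfl⟩ ⟨w, hw, h.symm⟩) (by simp)

/-- Edge `ab` of triangle `i` is the path `γ`. -/
def IsPath (T : Triangulation S n) (i : Fin n) (a b : Fin 3) (γ : ℝ → S) : Prop :=
  ∀ t ∈ Icc (0 : ℝ) 1, T.σ i (ept a b t) = γ t

lemma edge_inj (T : Triangulation S n) {i : Fin n} {a b : Fin 3} (hab : a ≠ b) {t u : ℝ}
    (ht : t ∈ Ioo (0 : ℝ) 1) (hu : u ∈ Ioo (0 : ℝ) 1)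
    (h : T.σ i (ept a b t) = T.σ i (ept a b u)) : t = u :=
  ept_inj hab (T.inj_edge i _ (edg_mem hab) (ept_mem_eo hab ht) (ept_mem_eo hab hu) h)

/-- Glued edges are parametrized in the same way, up to reversal. -/
lemma edge_match (T : Triangulation S n) {i j : Fin n} {a b a' b' : Fin 3} (hab : a ≠ b)
    (hab' : a' ≠ b') {t u : ℝ} (ht : t ∈ Ioo (0 : ℝ) 1) (hu : u ∈ Ioo (0 : ℝ) 1)
    (h : T.σ i (ept a b t) = T.σ j (ept a' b' u)) :
    ((∀ v ∈ Icc (0 : ℝ) 1, T.σ i (ept a b v) = T.σ j (ept a' b' v)) ∧ t = u) ∨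
    ((∀ v ∈ Icc (0 : ℝ) 1, T.σ i (ept a b v) = T.σ j (ept b' a' v)) ∧ t = 1 - u) := by
  have heq : T.σ i '' eo (edg a b) = T.σ j '' eo (edg a' b') := by
    rcases T.edge_eq_or_disjoint i j _ (edg_mem hab) _ (edg_mem hab') with h1 | h1
    · exact h1
    · exact absurd (disjoint_left.1 h1 ⟨_, ept_mem_eo hab ht, rfl⟩
        ⟨_, ept_mem_eo hab' hu, h.symm⟩) (by simp)
  obtain ⟨A, hA, hσ⟩ := T.glue i j _ (edg_mem hab) _ (edg_mem hab') heq
  have hAe : ∀ v, A (ept a b v) = AffineMap.lineMap (A (vtx a)) (A (vtx b)) v := fun v => by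
    rw [ept, AffineMap.apply_lineMap]
  obtain ⟨s, hs, hsA⟩ : ∃ s ∈ Icc (0 : ℝ) 1, ept a' b' s = A (vtx a) := by
    rw [← mem_edg, ← hA]
    exact ⟨_, mem_edg.2 ⟨0, by simp, ept_zero a b⟩, rfl⟩
  obtain ⟨r, hr, hrA⟩ : ∃ s ∈ Icc (0 : ℝ) 1, ept a' b' s = A (vtx b) := by
    rw [← mem_edg, ← hA]
    exact ⟨_, mem_edg.2 ⟨1, by simp, ept_one a b⟩, rfl⟩
  have hlam : ∀ v, lam b' (A (ept a b v)) = (1 - v) * s + v * r := fun v => by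
    rw [hAe, ← hsA, ← hrA, lam_lineMap, lam_ept, lam_ept]; simp [hab'.symm]
  obtain ⟨v0, hv0, h0⟩ : ∃ v ∈ Icc (0 : ℝ) 1, (1 - v) * s + v * r = 0 := by
    have : vtx a' ∈ A '' edg a b := by
      rw [hA]; exact mem_edg.2 ⟨0, by simp, ept_zero _ _⟩
    obtain ⟨z, hz, hzA⟩ := this
    obtain ⟨v, hv, rfl⟩ := mem_edg.1 hz
    exact ⟨v, hv, by rw [← hlam, hzA, lam_vtx]; simp [hab'.symm]⟩
  obtain ⟨v1, hv1, h1⟩ : ∃ v ∈ Icc (0 : ℝ) 1, (1 - v) * s + v * r = 1 := by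
    have : vtx b' ∈ A '' edg a b := by
      rw [hA]; exact mem_edg.2 ⟨1, by simp, ept_one _ _⟩
    obtain ⟨z, hz, hzA⟩ := this
    obtain ⟨v, hv, rfl⟩ := mem_edg.1 hz
    exact ⟨v, hv, by rw [← hlam, hzA, lam_vtx]; simp⟩
  have hsr : (s = 0 ∧ r = 1) ∨ (s = 1 ∧ r = 0) := by
    obtain ⟨hs0, hs1⟩ := hs
    obtain ⟨hr0, hr1⟩ := hr
    obtain ⟨a0, a1⟩ := hv0
    obtain ⟨b0, b1⟩ := hv1
    have m1 : 0 ≤ (1 - v0) * s := mul_nonneg (by linarith) hs0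
    have m2 : 0 ≤ v0 * r := mul_nonneg a0 hr0
    have m3 : 0 ≤ (1 - v1) * (1 - s) := mul_nonneg (by linarith) (by linarith)
    have m4 : 0 ≤ v1 * (1 - r) := mul_nonneg b0 (by linarith)
    have z1 : (1 - v0) * s = 0 := by linarith
    have z2 : v0 * r = 0 := by linarith
    have z3 : (1 - v1) * (1 - s) = 0 := by linarith
    have z4 : v1 * (1 - r) = 0 := by linarith
    rcases mul_eq_zero.1 z1 with q1 | q1
    · have : r = 0 := by
        rcases mul_eq_zero.1 z2 with q | q
        · linarith
        · exact q
      subst this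
      right
      refine ⟨?_, rfl⟩
      rcases mul_eq_zero.1 z3 with q | q
      · have : v1 = 0 := by linarith
        linarith
      · linarith
    · subst q1
      left
      refine ⟨rfl, ?_⟩
      rcases mul_eq_zero.1 z4 with q | q
      · rw [q] at z3; linarith
      · linarith
  rcases hsr with ⟨rfl, rfl⟩ | ⟨rfl, rfl⟩
  · have hp : ∀ v ∈ Icc (0 : ℝ) 1, T.σ i (ept a b v) = T.σ j (ept a' b' v) := by
      intro v hv
      rw [← hσ _ (mem_edg.2 ⟨v, hv, rfl⟩), hAe, ← hsA, ← hrA, ept_zero, ept_one, ept]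
    refine Or.inl ⟨hp, edge_inj T (i := j) hab' ht hu ?_⟩
    rw [← h, hp t (Ioo_subset_Icc_self ht)]
  · have hp : ∀ v ∈ Icc (0 : ℝ) 1, T.σ i (ept a b v) = T.σ j (ept b' a' v) := by
      intro v hv
      rw [← hσ _ (mem_edg.2 ⟨v, hv, rfl⟩), hAe, ← hsA, ← hrA, ept_zero, ept_one, ept]
    refine Or.inr ⟨hp, edge_inj T (i := j) hab'.symm ht (u := 1 - u)
      ⟨by linarith [hu.2], by linarith [hu.1]⟩ ?_⟩
    rw [← hp t (Ioo_subset_Icc_self ht), h, ept_symm a' b' (1 - u), sub_sub_cancel]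

/-! ### Three families of compatible functions -/

open scoped Classical in
/-- Vertex functions. -/
def fV (T : Triangulation S n) (v : S) (i : Fin n) (z : E2) : ℝ :=
  ∑ a : Fin 3, (if T.σ i (vtx a) = v then 1 else 0) * lam a z

open scoped Classical in
/-- Edge functions. -/
def fE (T : Triangulation S n) (γ : ℝ → S) (i : Fin n) (z : E2) : ℝ :=
  ∑ a : Fin 3, ∑ b : Fin 3,
    (if a ≠ b ∧ IsPath T i a b γ then 1 else 0) * (lam a z ^ 2 * lam b z)

open scoped Classical in
/-- Interior functions. -/
def fI (i₀ : Fin n) (h : E2 → ℝ) (i : Fin n) (z : E2) : ℝ :=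
  (if i = i₀ then 1 else 0) * (h z * (lam 0 z * lam 1 z * lam 2 z))

lemma fV_contDiff (T : Triangulation S n) (v : S) (i : Fin n) : ContDiff ℝ 1 (fV T v i) := by
  unfold fV
  exact ContDiff.sum fun a _ => contDiff_const.mul (lam_contDiff a)

lemma fE_contDiff (T : Triangulation S n) (γ : ℝ → S) (i : Fin n) : ContDiff ℝ 1 (fE T γ i) := by
  unfold fE
  exact ContDiff.sum fun a _ => ContDiff.sum fun b _ =>
    contDiff_const.mul (((lam_contDiff a).pow 2).mul (lam_contDiff b))

lemma fI_contDiff (i₀ : Fin n) {h : E2 → ℝ} (hh : ContDiff ℝ 1 h) (i : Fin n) :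
    ContDiff ℝ 1 (fI i₀ h i) := by
  unfold fI
  exact contDiff_const.mul
    (hh.mul (((lam_contDiff 0).mul (lam_contDiff 1)).mul (lam_contDiff 2)))

open scoped Classical in
lemma fV_vtx (T : Triangulation S n) (v : S) (i : Fin n) (a : Fin 3) :
    fV T v i (vtx a) = if T.σ i (vtx a) = v then 1 else 0 := by
  unfold fV
  simp [lam_vtx]

open scoped Classical in
lemma fV_ept (T : Triangulation S n) (v : S) (i : Fin n) (a b : Fin 3) (t : ℝ) :
    fV T v i (ept a b t) = (1 - t) * (if T.σ i (vtx a) = v then 1 else 0) +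
      t * (if T.σ i (vtx b) = v then 1 else 0) := by
  rw [← fV_vtx T v i a, ← fV_vtx T v i b]
  unfold fV
  simp only [ept, lam_lineMap, Finset.mul_sum, ← Finset.sum_add_distrib]
  exact Finset.sum_congr rfl fun c _ => by ring

lemma fE_vtx (T : Triangulation S n) (γ : ℝ → S) (i : Fin n) (a : Fin 3) :
    fE T γ i (vtx a) = 0 := by
  unfold fE
  refine Finset.sum_eq_zero fun b _ => Finset.sum_eq_zero fun c _ => ?_
  rw [lam_vtx, lam_vtx]
  by_cases h1 : b = a
  · by_cases h2 : c = a
    · subst h1; subst h2; simp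
    · simp [h2]
  · simp [h1]

open scoped Classical in
lemma fE_ept (T : Triangulation S n) (γ : ℝ → S) (i : Fin n) {a b : Fin 3} (hab : a ≠ b) (t : ℝ) :
    fE T γ i (ept a b t) = (if IsPath T i a b γ then 1 else 0) * ((1 - t) ^ 2 * t) +
      (if IsPath T i b a γ then 1 else 0) * (t ^ 2 * (1 - t)) := by
  unfold fE
  simp only [Fin.sum_univ_three, lam_ept]
  fin_cases a <;> fin_cases b <;> simp at hab ⊢ <;> ring

lemma fI_vtx (i₀ : Fin n) (h : E2 → ℝ) (i : Fin n) (a : Fin 3) : fI i₀ h i (vtx a) = 0 := by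
  unfold fI
  simp only [lam_vtx]
  fin_cases a <;> simp

lemma fI_ept (i₀ : Fin n) (h : E2 → ℝ) (i : Fin n) (a b : Fin 3) (t : ℝ) :
    fI i₀ h i (ept a b t) = 0 := by
  unfold fI
  simp only [lam_ept]
  fin_cases a <;> fin_cases b <;> simp

/-- Criterion for compatibility. -/
lemma compat_of (T : Triangulation S n) {φ : Fin n → E2 → ℝ}
    (hv : ∀ i j a b, T.σ i (vtx a) = T.σ j (vtx b) → φ i (vtx a) = φ j (vtx b))
    (he : ∀ i j a b a' b', a ≠ b → a' ≠ b' → ∀ t ∈ Ioo (0 : ℝ) 1,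
      (∀ v ∈ Icc (0 : ℝ) 1, T.σ i (ept a b v) = T.σ j (ept a' b' v)) →
      φ i (ept a b t) = φ j (ept a' b' t)) : Compat T φ := by
  intro i j z hz w hw h
  rcases classify hz with ⟨a, rfl⟩ | ⟨a, b, hab, t, ht, rfl⟩ | hz'
  · rcases classify hw with ⟨a', rfl⟩ | ⟨a', b', hab', u, hu, rfl⟩ | hw'
    · exact hv _ _ _ _ h
    · exact absurd h (T_v_edge T hab' hu)
    · exact absurd h (T_v_int T hw')
  · rcases classify hw with ⟨a', rfl⟩ | ⟨a', b', hab', u, hu, rfl⟩ | hw'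
    · exact absurd h.symm (T_v_edge T hab ht)
    · rcases edge_match T hab hab' ht hu h with ⟨hp, rfl⟩ | ⟨hp, rfl⟩
      · exact he _ _ _ _ _ _ hab hab' _ ht hp
      · rw [← ept_symm a b, he j i a' b' b a hab' hab.symm u hu]
        intro v hv
        have h1 := hp (1 - v) ⟨by linarith [hv.2], by linarith [hv.1]⟩
        rw [ept_symm b a, sub_sub_cancel, ept_symm a' b', sub_sub_cancel] at h1
        exact h1.symm
    · exact absurd h.symm (T_int_edge T hw' hab ht)
  · rcases classify hw with ⟨a', rfl⟩ | ⟨a', b', hab', u, hu, rfl⟩ | hw'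
    · exact absurd h.symm (T_v_int T hz')
    · exact absurd h (T_int_edge T hz' hab' hu)
    · obtain ⟨rfl, rfl⟩ := T_int_int T hz' hw' h
      rfl

lemma fV_compat (T : Triangulation S n) (v : S) : Compat T (fV T v) := by
  apply compat_of
  · intro i j a b h
    rw [fV_vtx, fV_vtx, h]
  · intro i j a b a' b' _ _ t _ hp
    have h0 := hp 0 (by simp)
    have h1 := hp 1 (by simp)
    rw [ept_zero, ept_zero] at h0
    rw [ept_one, ept_one] at h1
    rw [fV_ept, fV_ept, h0, h1]

lemma path_congr {T : Triangulation S n} {i j : Fin n} {a b a' b' : Fin 3}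
    (hp : ∀ v ∈ Icc (0 : ℝ) 1, T.σ i (ept a b v) = T.σ j (ept a' b' v)) (γ : ℝ → S) :
    IsPath T i a b γ ↔ IsPath T j a' b' γ :=
  forall₂_congr fun t ht => by rw [hp t ht]

lemma path_rev {T : Triangulation S n} {i j : Fin n} {a b a' b' : Fin 3}
    (hp : ∀ v ∈ Icc (0 : ℝ) 1, T.σ i (ept a b v) = T.σ j (ept a' b' v)) :
    ∀ v ∈ Icc (0 : ℝ) 1, T.σ i (ept b a v) = T.σ j (ept b' a' v) := by
  intro v hv
  rw [ept_symm a b, ept_symm a' b']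
  exact hp (1 - v) ⟨by linarith [hv.2], by linarith [hv.1]⟩

lemma fE_compat (T : Triangulation S n) (γ : ℝ → S) : Compat T (fE T γ) := by
  apply compat_of
  · intro i j a b h
    rw [fE_vtx, fE_vtx]
  · intro i j a b a' b' hab hab' t _ hp
    rw [fE_ept T γ i hab, fE_ept T γ j hab']
    have e1 := propext (path_congr hp γ)
    have e2 := propext (path_congr (path_rev hp) γ)
    congr 2 <;> congr 1

lemma fI_compat (T : Triangulation S n) (i₀ : Fin n) (h : E2 → ℝ) : Compat T (fI i₀ h) := by
  apply compat_of
  · intro i j a b _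
    rw [fI_vtx, fI_vtx]
  · intro i j a b a' b' _ _ t _ _
    rw [fI_ept, fI_ept]

lemma not_both (T : Triangulation S n) {i : Fin n} {a b : Fin 3} (hab : a ≠ b) {γ : ℝ → S}
    (h1 : IsPath T i a b γ) (h2 : IsPath T i b a γ) : False := by
  have e1 := h1 (1 / 3) (by norm_num)
  have e2 := h2 (1 / 3) (by norm_num)
  rw [ept_symm a b] at e2
  have := edge_inj T hab (by norm_num) (by norm_num) (e1.trans e2.symm)
  norm_num at this

lemma sep_int [T2Space S] [ConnectedSpace S] {T : Triangulation S n} {l : Set S → ℝ}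
    (hl : TriIneqT T l) {i j : Fin n} {z w : E2}
    (hz : z ∈ Do) (hw : w ∈ Dtri) (h : dGlue T l (T.σ i z) (T.σ j w) = 0) :
    T.σ i z = T.σ j w := by
  have key : ∀ g : E2 → ℝ, ContDiff ℝ 1 g → fI i g i z = fI i g j w := fun g hg =>
    dGlue_zero_compat hl (fI_contDiff i hg) (fI_compat T i g) (Do_sub hz) hw h
  have hp : 0 < lam 0 z * lam 1 z * lam 2 z :=
    mul_pos (mul_pos (mem_Do.1 hz 0) (mem_Do.1 hz 1)) (mem_Do.1 hz 2)
  have k1 := key (fun _ => 1) contDiff_const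
  simp only [fI, if_true, one_mul] at k1
  by_cases hij : j = i
  · subst hij
    simp only [if_true, one_mul] at k1
    have : z = w := lam_ext fun a => by
      have k2 := key (lam a) (lam_contDiff a)
      simp only [fI, if_true, one_mul] at k2
      rw [← k1] at k2
      exact mul_right_cancel₀ hp.ne' k2
    rw [this]
  · simp only [if_neg hij, zero_mul] at k1
    exact absurd k1 hp.ne'

lemma sep_edge [T2Space S] [ConnectedSpace S] {T : Triangulation S n} {l : Set S → ℝ}
    (hl : TriIneqT T l) {i j : Fin n} {a b : Fin 3} (hab : a ≠ b) {t : ℝ} (ht : t ∈ Ioo (0 : ℝ) 1)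
    {w : E2} (hw : w ∈ Dtri) (hw' : w ∉ Do)
    (h : dGlue T l (T.σ i (ept a b t)) (T.σ j w) = 0) :
    T.σ i (ept a b t) = T.σ j w := by
  classical
  have key : ∀ γ, fE T γ i (ept a b t) = fE T γ j w := fun γ =>
    dGlue_zero_compat hl (fE_contDiff T γ) (fE_compat T γ) (ept_mem (Ioo_subset_Icc_self ht)) hw h
  obtain ⟨t0, t1⟩ := ht
  have t1' : 0 < 1 - t := by linarith
  obtain ⟨γ, hγ⟩ : ∃ γ : ℝ → S, γ = fun v => T.σ i (ept a b v) := ⟨_, rfl⟩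
  obtain ⟨δ, hδ⟩ : ∃ δ : ℝ → S, δ = fun v => T.σ i (ept b a v) := ⟨_, rfl⟩
  have g1 : IsPath T i a b γ := fun v _ => by rw [hγ]
  have g2 : IsPath T i b a δ := fun v _ => by rw [hδ]
  have g3 : ¬ IsPath T i b a γ := fun h => not_both T hab g1 h
  have g4 : ¬ IsPath T i a b δ := fun h => not_both T hab h g2
  have k1 := key γ
  have k2 := key δ
  rw [fE_ept T _ i hab] at k1 k2
  simp only [if_pos g1, if_neg g3, if_pos g2, if_neg g4, one_mul, zero_mul, add_zero, zero_add]
    at k1 k2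
  have p1 : 0 < (1 - t) ^ 2 * t := by positivity
  have fin : ∀ a' b', a' ≠ b' → ∀ u ∈ Ioo (0 : ℝ) 1, w = ept a' b' u → IsPath T j a' b' γ →
      T.σ i (ept a b t) = T.σ j w := by
    rintro a' b' hab' u ⟨u0, u1⟩ rfl hp
    have hp' : IsPath T j b' a' δ := by
      intro v hv
      rw [ept_symm a' b', hp (1 - v) ⟨by linarith [hv.2], by linarith [hv.1]⟩, hγ, hδ]
      simp only [ept_symm a b]
    rw [fE_ept T _ j hab'] at k1 k2
    have q1 : ¬ IsPath T j b' a' γ := fun h => not_both T hab' hp h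
    have q2 : ¬ IsPath T j a' b' δ := fun h => not_both T hab' h hp'
    simp only [if_pos hp, if_neg q1, if_pos hp', if_neg q2, one_mul, zero_mul, add_zero, zero_add]
      at k1 k2
    have hu1 : 0 < 1 - u := by linarith
    have hx : t * (1 - u) = u * (1 - t) := by
      have e : ((1 - t) * t * ((1 - u) * u)) * (t * (1 - u)) =
          ((1 - t) * t * ((1 - u) * u)) * (u * (1 - t)) := by
        linear_combination ((1 - u) ^ 2 * u) * k2 - (u ^ 2 * (1 - u)) * k1
      exact mul_left_cancel₀ (by positivity) e
    have htu : t = u := by linarith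
    rw [hp u ⟨u0.le, u1.le⟩, hγ, htu]
  rcases classify hw with ⟨a', rfl⟩ | ⟨a', b', hab', u, hu, hwu⟩ | hd
  · rw [fE_vtx] at k1
    exact absurd k1 p1.ne'
  · by_cases c1 : IsPath T j a' b' γ
    · exact fin a' b' hab' u hu hwu c1
    by_cases c2 : IsPath T j b' a' γ
    · refine fin b' a' hab'.symm (1 - u) ⟨by linarith [hu.2], by linarith [hu.1]⟩ ?_ c2
      rw [hwu, ← ept_symm b' a']
    · rw [hwu, fE_ept T _ j hab', if_neg c1, if_neg c2] at k1
      simp only [zero_mul, add_zero] at k1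
      exact absurd k1 p1.ne'
  · exact absurd hd hw'

lemma dGlue_comm (T : Triangulation S n) (l : Set S → ℝ) (x y : S) :
    dGlue T l x y = dGlue T l y x := by
  unfold dGlue
  congr 1
  ext r
  exact ⟨chain_symm, chain_symm⟩

lemma sep [T2Space S] [ConnectedSpace S] {T : Triangulation S n} {l : Set S → ℝ}
    (hl : TriIneqT T l) {x y : S} (h : dGlue T l x y = 0) : x = y := by
  obtain ⟨i, z, hz, rfl⟩ := cover_D T x
  obtain ⟨j, w, hw, rfl⟩ := cover_D T y
  have h' := h
  rw [dGlue_comm] at h'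
  by_cases dz : z ∈ Do
  · exact sep_int hl dz hw h
  by_cases dw : w ∈ Do
  · exact (sep_int hl dw hz h').symm
  rcases classify hz with ⟨a, rfl⟩ | ⟨a, b, hab, t, ht, rfl⟩ | hz'
  · rcases classify hw with ⟨a', rfl⟩ | ⟨a', b', hab', u, hu, rfl⟩ | hw'
    · have k := dGlue_zero_compat hl (fV_contDiff T (T.σ j (vtx a'))) (fV_compat T _) hz hw h
      rw [fV_vtx, fV_vtx] at k
      by_contra hne
      simp [hne] at k
    · exact (sep_edge hl hab' hu hz dz h').symm
    · exact absurd hw' dw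
  · exact sep_edge hl hab ht hw dw h
  · exact absurd hz' dz

/-- `d[l]` is a metric on `S`: it is (a) finite (the defining set of chain
sums is nonempty), (b) nonnegative, (c) zero exactly on the diagonal, (d) symmetric, and
(e) satisfies the triangle inequality. -/
theorem dGlue_is_metric
    {S : Type} [TopologicalSpace S] [CompactSpace S] [T2Space S] [ConnectedSpace S]
    {n : ℕ} (T : Triangulation S n) (l : Set S → ℝ) (hl : TriIneqT T l) :
    ∀ x y z : S,
      (chainSums T l x y).Nonempty ∧
      0 ≤ dGlue T l x y ∧
      (dGlue T l x y = 0 ↔ x = y) ∧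
      dGlue T l x y = dGlue T l y x ∧
      dGlue T l x z ≤ dGlue T l x y + dGlue T l y z := by
  intro x y z
  have hb : ∀ x y, BddBelow (chainSums T l x y) := fun x y => ⟨0, fun r hr => chain_nonneg hr⟩
  refine ⟨chain_nonempty T l x y, Real.sInf_nonneg fun r hr => chain_nonneg hr,
    ⟨sep hl, ?_⟩, dGlue_comm T l x y, ?_⟩
  · rintro rfl
    obtain ⟨i, -⟩ := cover_D T x
    exact le_antisymm (csInf_le (hb x x) (chain_refl i x))
      (Real.sInf_nonneg fun r hr => chain_nonneg hr)
  · apply le_of_forall_pos_le_add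
    intro ε hε
    obtain ⟨r, hr, hr'⟩ := exists_lt_of_csInf_lt (chain_nonempty T l x y)
      (show sInf (chainSums T l x y) < dGlue T l x y + ε / 2 by unfold dGlue; linarith)
    obtain ⟨s, hs, hs'⟩ := exists_lt_of_csInf_lt (chain_nonempty T l y z)
      (show sInf (chainSums T l y z) < dGlue T l y z + ε / 2 by unfold dGlue; linarith)
    have : dGlue T l x z ≤ r + s := csInf_le (hb x z) (chain_trans hr hs)
    linarith
end
end
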